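/- arXiv:2008.12466 — 3 statements merged into one kernel-verified Lean document; each statement's English description precedes it below -/
import Mathlib

section
/- Let b > 0 and let g_b(y) = (1/(2b)) exp(−|y|/b). Let f : ℝ → ℝ be twice continuously differentiable such that f, f', f'' are integrable on ℝ and f(y) → 0 and f'(y) → 0 as |y| → ∞. Then for every x ∈ ℝ, ∫_{ℝ} (f(x − y) − b² f''(x − y)) g_b(y) dy = f(x). In other words, convolving the deconvoluting transform f − b² f'' with the Laplace density of scale b exactly recovers f. -/
/-!
The Laplace density of scale `b` is the fundamental solution of `1 - b² d²/dy²`, and this can be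
seen one half-line at a time. On `y > 0` the function `(h(y) - b² h''(y)) e^{-y/b} / (2b)` has the
explicit antiderivative `-(b h(y) + b² h'(y)) e^{-y/b} / (2b)`, so its integral over `(0, ∞)` is
`h(0)/2 + b h'(0)/2` (`integral_Ioi_laplace`). Applied to `h(y) = f(x - y)` and, after reflecting
the negative half-line, to `h(y) = f(x + y)`, this gives `f(x)/2 ∓ b f'(x)/2`; the derivative terms
cancel in the sum.
-/

open MeasureTheory Filter

theorem integrable_mul_laplace {b : ℝ} (hb : 0 < b) {k : ℝ → ℝ} (hk : Integrable k) :
    Integrable fun y => k y * ((1 / (2 * b)) * Real.exp (-|y| / b)) := by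
  refine hk.mul_bdd (c := 1 / (2 * b)) (by fun_prop) (Eventually.of_forall fun y => ?_)
  have h1 : Real.exp (-|y| / b) ≤ 1 :=
    Real.exp_le_one_iff.2 (div_nonpos_of_nonpos_of_nonneg (by simp) hb.le)
  rw [Real.norm_of_nonneg (by positivity)]
  exact mul_le_of_le_one_right (by positivity) h1

/-- The contribution of a half-line: `h 0 / 2 + b / 2 * h' 0` is the boundary term at `0` of the
antiderivative `-(h / 2 + b h' / 2) e^{-y/b}`, whose boundary term at infinity vanishes. -/
theorem integral_Ioi_laplace {b : ℝ} (hb : 0 < b) {h h' h'' : ℝ → ℝ}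
    (hd : ∀ y, HasDerivAt h (h' y) y) (hd' : ∀ y, HasDerivAt h' (h'' y) y)
    (hi : Integrable h) (hi'' : Integrable h'')
    (hl : Tendsto h atTop (nhds 0)) (hl' : Tendsto h' atTop (nhds 0)) :
    ∫ y in Set.Ioi 0, (h y - b ^ 2 * h'' y) * ((1 / (2 * b)) * Real.exp (-|y| / b))
      = h 0 / 2 + b / 2 * h' 0 := by
  have hint := (integrable_mul_laplace hb (hi.sub (hi''.const_mul (b ^ 2)))).integrableOn
    (s := Set.Ioi 0)
  have habs : Set.EqOn (fun y => (h y - b ^ 2 * h'' y) * ((1 / (2 * b)) * Real.exp (-|y| / b)))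
      (fun y => (h y - b ^ 2 * h'' y) * ((1 / (2 * b)) * Real.exp (-y / b))) (Set.Ioi 0) := by
    intro y hy
    simp only [abs_of_pos (Set.mem_Ioi.1 hy)]
  rw [setIntegral_congr_fun measurableSet_Ioi habs]
  have hexp : Tendsto (fun y : ℝ => Real.exp (-y / b)) atTop (nhds 0) :=
    Real.tendsto_exp_atBot.comp (tendsto_neg_atTop_atBot.atBot_div_const hb)
  have hlim : Tendsto (fun y => -(1 / 2 * h y + b / 2 * h' y) * Real.exp (-y / b)) atTop
      (nhds 0) := by
    simpa only [mul_zero, add_zero, neg_zero] using ((hl.const_mul (1 / 2)).add (hl'.const_mul (b / 2))).neg.mul hexp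
  rw [integral_Ioi_of_hasDerivAt_of_tendsto' (fun y _ => ?_)
    (IntegrableOn.congr_fun hint habs measurableSet_Ioi) hlim]
  · simp
    ring
  · have he : HasDerivAt (fun y : ℝ => Real.exp (-y / b)) (Real.exp (-y / b) * (-1 / b)) y :=
      ((hasDerivAt_neg y).div_const b).exp
    convert! (((hd y).const_mul (1 / 2)).add ((hd' y).const_mul (b / 2))).neg.mul he using 1
    simp only [Pi.neg_apply, Pi.add_apply]
    field_simp
    ring

/-- For `b > 0` and the Laplace density `g_b(y) = (1/(2b)) exp(−|y|/b)`: if `f : ℝ → ℝ` is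
twice continuously differentiable with `f, f', f''` integrable and `f(y) → 0`, `f'(y) → 0`
as `|y| → ∞`, then `∫ (f(x − y) − b² f''(x − y)) g_b(y) dy = f(x)` for every `x`; i.e.
convolving the deconvoluting transform `f − b² f''` with the Laplace density recovers `f`. -/
theorem laplace_deconvolution_exact
    (b : ℝ) (hb : 0 < b)
    (f : ℝ → ℝ) (hf : ContDiff ℝ 2 f)
    (hf_int : Integrable f) (hf'_int : Integrable (deriv f))
    (hf''_int : Integrable (deriv (deriv f)))
    (hf_lim : Tendsto f (cocompact ℝ) (nhds 0))
    (hf'_lim : Tendsto (deriv f) (cocompact ℝ) (nhds 0))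
    (x : ℝ) :
    ∫ y, (f (x - y) - b ^ 2 * deriv (deriv f) (x - y))
        * ((1 / (2 * b)) * Real.exp (-|y| / b)) = f x := by
  have hd : ∀ y, HasDerivAt f (deriv f y) y := fun y =>
    (hf.differentiable (by norm_num) y).hasDerivAt
  have hd' : ∀ y, HasDerivAt (deriv f) (deriv (deriv f) y) y := fun y =>
    (((contDiff_succ_iff_deriv (n := 1)).1 hf).2.2.differentiable (by norm_num) y).hasDerivAt
  have htop : Tendsto (fun y => x + y) atTop (cocompact ℝ) :=
    (tendsto_atTop_add_const_left _ x tendsto_id).mono_right atTop_le_cocompact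
  have hbot : Tendsto (fun y => x - y) atTop (cocompact ℝ) :=
    (tendsto_atBot_add_const_left _ x tendsto_neg_atTop_atBot).mono_right atBot_le_cocompact
  have hint := integrable_mul_laplace hb
    ((hf_int.comp_sub_left x).sub ((hf''_int.comp_sub_left x).const_mul (b ^ 2)))
  have hright := integral_Ioi_laplace hb (h := fun y => f (x - y))
    (h' := fun y => -deriv f (x - y)) (h'' := fun y => deriv (deriv f) (x - y))
    (fun y => (hd (x - y)).comp_const_sub x y)
    (fun y => by simpa only [neg_neg] using! ((hd' (x - y)).comp_const_sub x y).neg)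
    (hf_int.comp_sub_left x) (hf''_int.comp_sub_left x)
    (hf_lim.comp hbot) (by simpa using (hf'_lim.comp hbot).neg)
  have hleft := integral_Ioi_laplace hb (h := fun y => f (x + y))
    (h' := fun y => deriv f (x + y)) (h'' := fun y => deriv (deriv f) (x + y))
    (fun y => (hd (x + y)).comp_const_add x y) (fun y => (hd' (x + y)).comp_const_add x y)
    (hf_int.comp_add_left x) (hf''_int.comp_add_left x)
    (hf_lim.comp htop) (hf'_lim.comp htop)
  have hreflect := integral_comp_neg_Ioi 0 fun y =>
    (f (x - y) - b ^ 2 * deriv (deriv f) (x - y)) * ((1 / (2 * b)) * Real.exp (-|y| / b))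
  simp only [Pi.sub_apply] at hint
  simp only [sub_neg_eq_add, abs_neg, neg_zero] at hreflect
  rw [← intervalIntegral.integral_Iic_add_Ioi (b := 0) hint.integrableOn hint.integrableOn]
  rw [← hreflect, hleft, hright]
  simp only [add_zero, sub_zero]
  ring
end

section
/- Let K : ℝ → ℝ be integrable and twice continuously differentiable with K' and K'' integrable and K(x) → 0, K'(x) → 0 as |x| → ∞, and let Φ_K(t) = ∫_ℝ exp(i t x) K(x) dx be its Fourier transform. Let c > 0 and suppose t ↦ (1 + c² t²) Φ_K(t) is integrable. Then for every x ∈ ℝ, (1/(2π)) ∫_ℝ exp(−i t x) (1 + c² t²) Φ_K(t) dt = K(x) − c² K''(x). In particular, with c = b/h, the deconvoluting kernel K̂_h defined as the inverse Fourier transform of Φ_K(t)/Φ_n(t/h), where Φ_n(s) = 1/(1 + b² s²) is the characteristic function of the Laplace noise of scale b, equals K̂_h(x) = K(x) − (b²/h²) K''(x). -/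
/-!
Put `g = K - c² K''`, which is continuous and integrable. Each differentiation multiplies the
transform `∫ exp(itx) f(x) dx` by `-it`, so `(1 + c² t²) Φ_K(t)` is exactly the transform of `g`
(`laplaceCorrection_transform`). As this transform is integrable and `g` is continuous, Fourier
inversion, rescaled from Mathlib's kernel `exp(-2πixξ)` to `exp(itx)` (`inversion_charFun`),
recovers `g` at every point. The statement on the deconvoluting kernel is the same identity, since
`Φ_K(t) / Φ_n(t/h) = (1 + (b/h)² t²) Φ_K(t)`.
-/

open MeasureTheory Filter

open scoped FourierTransform

/-- Mathlib's Fourier transform at `ξ` is the transform with kernel `exp(itx)` at `t = -2πξ`. -/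
lemma fourier_eq_integral_cexp (f : ℝ → ℂ) (ξ : ℝ) :
    𝓕 f ξ = ∫ x : ℝ, Complex.exp (Complex.I * ((-2 * Real.pi * ξ : ℝ) : ℂ) * x) * f x := by
  rw [Real.fourier_real_eq_integral_exp_smul]
  refine integral_congr_ae (.of_forall fun x => ?_)
  simp only [smul_eq_mul]
  congr 2
  push_cast
  ring

/-- Fourier inversion in the normalization of characteristic functions. -/
lemma inversion_charFun {g Φ : ℝ → ℂ} (hg : Continuous g) (hg_int : Integrable g)
    (hΦ : ∀ ξ : ℝ, 𝓕 g ξ = Φ (-2 * Real.pi * ξ)) (hΦ_int : Integrable Φ) (x : ℝ) :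
    (1 / (2 * Real.pi) : ℂ) * ∫ t : ℝ, Complex.exp (-(Complex.I * t * x)) * Φ t = g x := by
  have hpi : (-2 * Real.pi : ℝ) ≠ 0 := by simp [Real.pi_ne_zero]
  have hF : Integrable (𝓕 g) := by
    rw [funext hΦ]
    exact hΦ_int.comp_mul_left' hpi
  have hinv := congrFun (hg.fourierInv_fourier_eq hg_int hF) x
  rw [Real.fourierInv_eq'] at hinv
  have hscale := Measure.integral_comp_mul_left
    (fun t : ℝ => Complex.exp (-(Complex.I * t * x)) * Φ t) (-2 * Real.pi)
  have habs : |(-2 * Real.pi)⁻¹| = 1 / (2 * Real.pi) := by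
    rw [abs_inv, abs_mul, abs_neg, abs_two, abs_of_pos Real.pi_pos, one_div]
  rw [habs, Complex.real_smul] at hscale
  push_cast at hscale
  rw [← hscale, ← hinv]
  refine integral_congr_ae (.of_forall fun ξ => ?_)
  simp only [smul_eq_mul, hΦ]
  congr 2
  simp only [RCLike.inner_apply, conj_trivial]
  push_cast
  ring

/-- The transform of `f - c² f''`, where `f₁ = f'` and `f₂ = f''`, at `t = -2πξ` is
`(1 + c² t²)` times that of `f`. -/
lemma laplaceCorrection_transform {f f₁ f₂ : ℝ → ℂ} (h₁ : ∀ x, HasDerivAt f (f₁ x) x)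
    (h₂ : ∀ x, HasDerivAt f₁ (f₂ x) x) (hf : Integrable f) (hf₁ : Integrable f₁)
    (hf₂ : Integrable f₂) (c ξ : ℝ) :
    𝓕 (fun x => f x - (c : ℂ) ^ 2 * f₂ x) ξ =
      ((1 + c ^ 2 * (-2 * Real.pi * ξ) ^ 2 : ℝ) : ℂ) * 𝓕 f ξ := by
  have e₁ : deriv f = f₁ := funext fun x => (h₁ x).deriv
  have e₂ : deriv f₁ = f₂ := funext fun x => (h₂ x).deriv
  have T₁ := congrFun (Real.fourier_deriv hf (fun x => (h₁ x).differentiableAt) (e₁ ▸ hf₁)) ξ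
  have T₂ := congrFun (Real.fourier_deriv hf₁ (fun x => (h₂ x).differentiableAt) (e₂ ▸ hf₂)) ξ
  rw [e₁] at T₁
  rw [e₂, T₁] at T₂
  have hlin : 𝓕 (fun x => f x - (c : ℂ) ^ 2 * f₂ x) ξ = 𝓕 f ξ - (c : ℂ) ^ 2 * 𝓕 f₂ ξ := by
    have hi₀ := (Real.fourierIntegral_convergent_iff ξ).2 hf
    have hi₂ := (Real.fourierIntegral_convergent_iff ξ).2 hf₂
    simp only [Real.fourier_eq]
    rw [← integral_const_mul, ← integral_sub hi₀ (hi₂.const_mul _)]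
    refine integral_congr_ae (.of_forall fun x => ?_)
    simp only [Circle.smul_def, smul_eq_mul]
    ring
  rw [hlin, T₂]
  simp only [smul_eq_mul]
  push_cast
  linear_combination (-(c : ℂ) ^ 2 * 4 * Real.pi ^ 2 * ξ ^ 2 * 𝓕 f ξ) * Complex.I_sq

/-- Let `K : ℝ → ℝ` be integrable and twice continuously differentiable with `K', K''`
integrable and `K, K' → 0` at infinity, with Fourier transform
`Φ_K(t) = ∫ exp(i t x) K(x) dx`. If `c > 0` and `t ↦ (1 + c² t²) Φ_K(t)` is integrable,
then `(1/(2π)) ∫ exp(−i t x)(1 + c² t²) Φ_K(t) dt = K(x) − c² K''(x)`.  In particular,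
with `c = b/h`, the deconvoluting kernel (the inverse Fourier transform of
`Φ_K(t)/Φ_n(t/h)` with `Φ_n(s) = 1/(1 + b² s²)` the Laplace characteristic function)
equals `K̂_h(x) = K(x) − (b²/h²) K''(x)`. -/
theorem deconvoluting_kernel_closed_form
    (K : ℝ → ℝ) (hK : ContDiff ℝ 2 K) (hK_int : Integrable K)
    (hK'_int : Integrable (deriv K)) (hK''_int : Integrable (deriv (deriv K)))
    (hK_lim : Tendsto K (cocompact ℝ) (nhds 0))
    (hK'_lim : Tendsto (deriv K) (cocompact ℝ) (nhds 0))
    (ΦK : ℝ → ℂ) (hΦK : ∀ t : ℝ, ΦK t = ∫ x : ℝ, Complex.exp (Complex.I * t * x) * K x)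
    (c : ℝ) (hc : 0 < c)
    (h_int : Integrable (fun t : ℝ => ((1 + c ^ 2 * t ^ 2 : ℝ) : ℂ) * ΦK t)) :
    (∀ x : ℝ,
      (1 / (2 * Real.pi) : ℂ) *
          ∫ t : ℝ, Complex.exp (-(Complex.I * t * x)) * (((1 + c ^ 2 * t ^ 2 : ℝ) : ℂ) * ΦK t)
        = ((K x - c ^ 2 * deriv (deriv K) x : ℝ) : ℂ)) ∧
    (∀ b h : ℝ, 0 < b → 0 < h → c = b / h → ∀ x : ℝ,
      (1 / (2 * Real.pi) : ℂ) *
          ∫ t : ℝ, Complex.exp (-(Complex.I * t * x)) *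
            (ΦK t / ((1 / (1 + b ^ 2 * (t / h) ^ 2) : ℝ) : ℂ))
        = ((K x - (b ^ 2 / h ^ 2) * deriv (deriv K) x : ℝ) : ℂ)) := by
  have hd : Differentiable ℝ K := hK.differentiable (by norm_num)
  have hK' : ContDiff ℝ 1 (deriv K) := ((contDiff_succ_iff_deriv (n := 1)).1 hK).2.2
  have hd' : Differentiable ℝ (deriv K) := hK'.differentiable (by norm_num)
  have hK'' : Continuous (deriv (deriv K)) := hK'.continuous_deriv le_rfl
  have main : ∀ x : ℝ,
      (1 / (2 * Real.pi) : ℂ) *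
          ∫ t : ℝ, Complex.exp (-(Complex.I * t * x)) * (((1 + c ^ 2 * t ^ 2 : ℝ) : ℂ) * ΦK t)
        = ((K x - c ^ 2 * deriv (deriv K) x : ℝ) : ℂ) := by
    intro x
    have hcont := hK.continuous
    have i₀ : Integrable (fun x : ℝ => (K x : ℂ)) := hK_int.ofReal
    have i₁ : Integrable (fun x : ℝ => ((deriv K x : ℝ) : ℂ)) := hK'_int.ofReal
    have i₂ : Integrable (fun x : ℝ => ((deriv (deriv K) x : ℝ) : ℂ)) := hK''_int.ofReal
    have d₁ : ∀ x, HasDerivAt (fun x : ℝ => (K x : ℂ)) ((deriv K x : ℝ) : ℂ) x :=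
      fun x => (hd x).hasDerivAt.ofReal_comp
    have d₂ : ∀ x, HasDerivAt (fun x : ℝ => ((deriv K x : ℝ) : ℂ)) ((deriv (deriv K) x : ℝ) : ℂ) x :=
      fun x => (hd' x).hasDerivAt.ofReal_comp
    rw [inversion_charFun (g := fun x : ℝ => (K x : ℂ) - (c : ℂ) ^ 2 * ((deriv (deriv K) x : ℝ) : ℂ))
      (by fun_prop) (i₀.sub (i₂.const_mul _)) ?_ h_int x]
    · push_cast
      ring
    · intro ξ
      rw [laplaceCorrection_transform d₁ d₂ i₀ i₁ i₂, fourier_eq_integral_cexp, hΦK]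
  refine ⟨main, fun b h hb hh hcb x => ?_⟩
  have hx := main x
  rw [hcb, div_pow] at hx
  rw [← hx]
  congr 1
  refine integral_congr_ae (.of_forall fun t => ?_)
  simp only
  have e : 1 / (1 + b ^ 2 * (t / h) ^ 2) = (1 + b ^ 2 / h ^ 2 * t ^ 2)⁻¹ := by
    rw [one_div, div_pow]
    congr 1
    ring
  rw [e, Complex.ofReal_inv, div_inv_eq_mul, mul_comm (ΦK t)]
end

section
/- Let b, h > 0, let N be a real random variable with Laplace density g_b(y) = (1/(2b)) exp(−|y|/b), and let K : ℝ → ℝ be twice continuously differentiable with K, K', K'' integrable and K(u) → 0, K'(u) → 0 as |u| → ∞. Define the adjusted kernel K̂_h(u) = K(u) − (b²/h²) K''(u). Then for all x, x₀ ∈ ℝ, E[ K̂_h((x − x₀ − N)/h) ] = K((x − x₀)/h). That is, the adjusted kernel evaluated at the privatized point is an unbiased estimate of the original kernel evaluated at the true point. -/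
/-!
The Laplace density `g_b` is the Green's function of `1 - b² d²/dy²`, so integrating
`L - b² L''` against `g_b` returns `L 0`; the theorem is the case `L y = K ((x - x₀ - y) / h)`,
for which `L'' = K'' / h²`. The Green's function identity is `integral_laplace_mul`: on each
half-line the integrand has the explicit primitive `exp (-|y| / b) * (∓ L / 2 - b / 2 * L')`
(minus for `y > 0`, plus for `y < 0`), which vanishes at infinity because `L` and `L'` do, and in
the sum of the two boundary values at `0` the terms in `L' 0` cancel.
-/

open MeasureTheory Filter

/-- The Laplace density is the Green's function of `1 - b² d²/dy²`. -/
lemma integral_laplace_mul {b : ℝ} (hb : 0 < b) {L L' L'' : ℝ → ℝ}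
    (hL : ∀ y, HasDerivAt L (L' y) y) (hL' : ∀ y, HasDerivAt L' (L'' y) y)
    (hint : Integrable fun y => L y - b ^ 2 * L'' y)
    (h0 : Tendsto L (cocompact ℝ) (nhds 0)) (h1 : Tendsto L' (cocompact ℝ) (nhds 0)) :
    ∫ y, ((1 / (2 * b)) * Real.exp (-|y| / b)) * (L y - b ^ 2 * L'' y) = L 0 := by
  have hI : Integrable fun y =>
      ((1 / (2 * b)) * Real.exp (-|y| / b)) * (L y - b ^ 2 * L'' y) := by
    refine hint.bdd_mul (c := 1 / (2 * b)) (by fun_prop) (Eventually.of_forall fun y => ?_)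
    rw [Real.norm_of_nonneg (by positivity)]
    refine mul_le_of_le_one_right (by positivity) (Real.exp_le_one_iff.2 ?_)
    exact div_nonpos_of_nonpos_of_nonneg (neg_nonpos.2 (abs_nonneg y)) hb.le
  -- One computation serves both half-lines: `s = -1` on the right and `s = 1` on the left.
  have hder : ∀ s : ℝ, s ^ 2 = 1 → ∀ y, HasDerivAt
      (fun y => Real.exp (s * y / b) * (s / 2 * L y - b / 2 * L' y))
      (((1 / (2 * b)) * Real.exp (s * y / b)) * (L y - b ^ 2 * L'' y)) y := by
    intro s hs y
    have he : HasDerivAt (fun y => Real.exp (s * y / b)) (Real.exp (s * y / b) * (s * 1 / b)) y :=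
      (((hasDerivAt_id y).const_mul s).div_const b).exp
    refine (he.mul (((hL y).const_mul (s / 2)).sub ((hL' y).const_mul (b / 2)))).congr_deriv ?_
    simp only [Pi.sub_apply]
    field_simp
    linear_combination L y * hs
  have hz : ∀ s : ℝ, Tendsto (fun y => s / 2 * L y - b / 2 * L' y) (cocompact ℝ) (nhds 0) := by
    intro s
    simpa using (h0.const_mul (s / 2)).sub (h1.const_mul (b / 2))
  have htop : Tendsto (fun y => Real.exp (-1 * y / b) * (-1 / 2 * L y - b / 2 * L' y))
      atTop (nhds 0) := by
    refine squeeze_zero_norm' ?_ (tendsto_zero_iff_norm_tendsto_zero.1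
      ((hz (-1)).mono_left atTop_le_cocompact))
    filter_upwards [eventually_ge_atTop 0] with y hy
    rw [norm_mul, Real.norm_of_nonneg (Real.exp_pos _).le]
    exact mul_le_of_le_one_left (norm_nonneg _)
      (Real.exp_le_one_iff.2 (div_nonpos_of_nonpos_of_nonneg (by linarith) hb.le))
  have hbot : Tendsto (fun y => Real.exp (1 * y / b) * (1 / 2 * L y - b / 2 * L' y))
      atBot (nhds 0) := by
    refine squeeze_zero_norm' ?_ (tendsto_zero_iff_norm_tendsto_zero.1
      ((hz 1).mono_left atBot_le_cocompact))
    filter_upwards [eventually_le_atBot 0] with y hy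
    rw [norm_mul, Real.norm_of_nonneg (Real.exp_pos _).le]
    exact mul_le_of_le_one_left (norm_nonneg _)
      (Real.exp_le_one_iff.2 (div_nonpos_of_nonpos_of_nonneg (by linarith) hb.le))
  have eR : Set.EqOn (fun y => ((1 / (2 * b)) * Real.exp (-|y| / b)) * (L y - b ^ 2 * L'' y))
      (fun y => ((1 / (2 * b)) * Real.exp (-1 * y / b)) * (L y - b ^ 2 * L'' y)) (Set.Ioi 0) := by
    intro y hy
    simp only [abs_of_pos (Set.mem_Ioi.1 hy), neg_one_mul]
  have eL : Set.EqOn (fun y => ((1 / (2 * b)) * Real.exp (-|y| / b)) * (L y - b ^ 2 * L'' y))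
      (fun y => ((1 / (2 * b)) * Real.exp (1 * y / b)) * (L y - b ^ 2 * L'' y)) (Set.Iic 0) := by
    intro y hy
    simp only [abs_of_nonpos (Set.mem_Iic.1 hy), neg_neg, one_mul]
  rw [← intervalIntegral.integral_Iic_add_Ioi (b := 0) hI.integrableOn hI.integrableOn,
    setIntegral_congr_fun measurableSet_Iic eL, setIntegral_congr_fun measurableSet_Ioi eR,
    integral_Iic_of_hasDerivAt_of_tendsto' (fun y _ => hder 1 (by norm_num) y)
      (hI.integrableOn.congr_fun eL measurableSet_Iic) hbot,
    integral_Ioi_of_hasDerivAt_of_tendsto' (fun y _ => hder (-1) (by norm_num) y)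
      (hI.integrableOn.congr_fun eR measurableSet_Ioi) htop]
  simp only [mul_zero, zero_div, Real.exp_zero]
  ring

/-- Let `N` be Laplace noise with scale `b > 0` and let `K` be a twice continuously
differentiable kernel with `K, K', K''` integrable and `K, K' → 0` at infinity. Then the
adjusted kernel `K̂_h(u) = K(u) − (b²/h²) K''(u)` evaluated at the privatized point is an
unbiased estimate of the original kernel at the true point:
`E[K̂_h((x − x₀ − N)/h)] = K((x − x₀)/h)`. -/
theorem adjusted_kernel_unbiased
    (b h : ℝ) (hb : 0 < b) (hh : 0 < h)
    (Ω : Type*) [MeasureSpace Ω] (P : Measure Ω) [IsProbabilityMeasure P]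
    (N : Ω → ℝ) (hN : Measurable N)
    (hlaw : Measure.map N P =
      volume.withDensity (fun y => ENNReal.ofReal ((1 / (2 * b)) * Real.exp (-|y| / b))))
    (K : ℝ → ℝ) (hK : ContDiff ℝ 2 K) (hK_int : Integrable K)
    (hK'_int : Integrable (deriv K)) (hK''_int : Integrable (deriv (deriv K)))
    (hK_lim : Tendsto K (cocompact ℝ) (nhds 0))
    (hK'_lim : Tendsto (deriv K) (cocompact ℝ) (nhds 0))
    (x x₀ : ℝ) :
    ∫ ω, (K ((x - x₀ - N ω) / h)
        - (b ^ 2 / h ^ 2) * deriv (deriv K) ((x - x₀ - N ω) / h)) ∂P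
      = K ((x - x₀) / h) := by
  have hd1 : Differentiable ℝ K := hK.differentiable (by norm_num)
  have hK1 : ContDiff ℝ 1 (deriv K) := by
    simpa using hK.iterate_deriv' 1 1
  have hd2 : Differentiable ℝ (deriv K) := hK1.differentiable (by norm_num)
  have hc2 : Continuous (deriv (deriv K)) := hK1.continuous_deriv le_rfl
  have hu : ∀ y, HasDerivAt (fun y => (x - x₀ - y) / h) (-1 / h) y := fun y =>
    ((hasDerivAt_id y).const_sub (x - x₀)).div_const h
  have hcoc : Tendsto (fun y => (x - x₀ - y) / h) (cocompact ℝ) (cocompact ℝ) :=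
    ((Homeomorph.subLeft (x - x₀)).trans
      (Homeomorph.mulRight₀ h⁻¹ (inv_ne_zero hh.ne'))).isClosedEmbedding.tendsto_cocompact
  have key := integral_laplace_mul hb (L := fun y => K ((x - x₀ - y) / h))
    (L' := fun y => deriv K ((x - x₀ - y) / h) * (-1 / h))
    (L'' := fun y => deriv (deriv K) ((x - x₀ - y) / h) * (-1 / h) * (-1 / h))
    (fun y => (hd1 _).hasDerivAt.comp y (hu y))
    (fun y => ((hd2 _).hasDerivAt.comp y (hu y)).mul_const _)
    (((hK_int.comp_div hh.ne').comp_sub_left (x - x₀)).sub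
      (((((hK''_int.comp_div hh.ne').comp_sub_left (x - x₀)).mul_const _).mul_const _).const_mul _))
    (hK_lim.comp hcoc) (by simpa using (hK'_lim.comp hcoc).mul_const (-1 / h))
  rw [sub_zero] at key
  have hcont : Continuous fun y => K ((x - x₀ - y) / h)
      - (b ^ 2 / h ^ 2) * deriv (deriv K) ((x - x₀ - y) / h) := by
    have := hd1.continuous
    fun_prop
  rw [← integral_map (f := fun y => K ((x - x₀ - y) / h)
      - (b ^ 2 / h ^ 2) * deriv (deriv K) ((x - x₀ - y) / h)) hN.aemeasurable
      hcont.aestronglyMeasurable, hlaw,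
    integral_withDensity_eq_integral_toReal_smul (by fun_prop) (by simp), ← key]
  congr 1 with y
  rw [ENNReal.toReal_ofReal (by positivity), smul_eq_mul]
  ring
end
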